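/- Let N ≥ 1, let μ_1,…,μ_N ∈ ℂ, let α₀ > 0 and C ≥ α₀, and let V_1,…,V_N : [0,∞) → ℝ be measurable with α₀ ≤ V_j(s) ≤ C for all s ≥ 0 and all j. Suppose E : [0,∞) → ℝ is continuous with E(0) > 0 and satisfies E(t) = E(0) − 2 ∑_{j=1}^N ∫₀ᵗ (Re μ_j)² V_j(s) E(s) ds for all t ≥ 0, and suppose m : [0,∞) → ℝ satisfies m(t)/t → 0 as t → ∞. Then limsup_{t→∞} (1/t) · log( e^{2 m(t)} E(t) ) ≤ −ω, where ω := 2 α₀ ∑_{j=1}^N (Re μ_j)². Moreover, if Re μ_j ≠ 0 for every j, then ω > 0. -/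

import Mathlib

open MeasureTheory Real Filter

lemma slope_aux (f φ h : ℝ → ℝ)
    (hint : ∀ a b : ℝ, 0 ≤ a → a ≤ b → IntervalIntegrable φ volume a b)
    (hf : ∀ a b : ℝ, 0 ≤ a → a ≤ b → f b - f a = ∫ s in a..b, φ s)
    (hle : ∀ s, 0 ≤ s → φ s ≤ h s) (hh : ContinuousOn h (Set.Ici 0))
    (x : ℝ) (hx : 0 ≤ x) (r : ℝ) (hr : h x < r) :
    ∃ᶠ z in nhdsWithin x (Set.Ioi x), (z - x)⁻¹ * (f z - f x) < r := by
  obtain ⟨r', h1, h2⟩ := exists_between hr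
  have hc : ContinuousWithinAt h (Set.Ici x) x :=
    (hh x hx).mono (Set.Ici_subset_Ici.2 hx)
  have hev : ∀ᶠ s in nhdsWithin x (Set.Ici x), h s < r' := hc.eventually_lt_const h1
  obtain ⟨u, hu, hsub⟩ := mem_nhdsGE_iff_exists_Ico_subset.1 hev
  apply Eventually.frequently
  filter_upwards [Ioo_mem_nhdsGT hu] with z hz
  have hxz : 0 < z - x := sub_pos.2 hz.1
  have : f z - f x ≤ (z - x) * r' := by
    rw [hf x z hx hz.1.le]
    have := intervalIntegral.integral_mono_on hz.1.le (hint x z hx hz.1.le)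
      (intervalIntegrable_const (c := r') ) (fun s hs =>
        (hle s (hx.trans hs.1)).trans (le_of_lt (hsub ⟨hs.1, hs.2.trans_lt hz.2⟩)))
    simpa using this
  calc (z - x)⁻¹ * (f z - f x) ≤ (z - x)⁻¹ * ((z - x) * r') := by gcongr
    _ = r' := by field_simp
    _ < r := h2

lemma two_bounds (E g : ℝ → ℝ) (w K : ℝ) (hw : 0 ≤ w)
    (hgm : Measurable g) (hg1 : ∀ s, 0 ≤ s → w ≤ g s) (hg2 : ∀ s, 0 ≤ s → g s ≤ K)
    (hEc : ContinuousOn E (Set.Ici 0)) (hE0 : 0 < E 0)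
    (hint : ∀ a b : ℝ, 0 ≤ a → a ≤ b → IntervalIntegrable (fun s => g s * E s) volume a b)
    (hE : ∀ t, 0 ≤ t → E t = E 0 - ∫ s in (0:ℝ)..t, g s * E s) (t : ℝ) (ht : 0 ≤ t) :
    E 0 * exp (-(K + 1) * t) ≤ E t ∧ E t ≤ E 0 * exp (-w * t) := by
  have hd : ∀ a b : ℝ, 0 ≤ a → a ≤ b → E b - E a = - ∫ s in a..b, g s * E s := by
    intro a b ha hab
    rw [hE a ha, hE b (ha.trans hab), ← intervalIntegral.integral_add_adjacent_intervals
      (hint 0 a le_rfl ha) (hint a b ha hab)]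
    ring
  have low : ∀ t, 0 ≤ t → E 0 * exp (-(K + 1) * t) ≤ E t := by
    intro t ht
    have key := image_le_of_liminf_slope_right_lt_deriv_boundary' (f := fun t => - E t)
      (f' := fun t => K * |E t|) (a := 0) (b := t)
      (hEc.neg.mono Set.Icc_subset_Ici_self)
      (fun x hx r hr => slope_aux (fun t => - E t) (fun s => g s * E s) (fun t => K * |E t|) hint
        (fun a b ha hab => by have := hd a b ha hab; linarith)
        (fun s hs => by
          have h1 := hg1 s hs
          have h2 := hg2 s hs
          calc g s * E s ≤ g s * |E s| := by
                exact mul_le_mul_of_nonneg_left (le_abs_self _) (hw.trans h1)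
            _ ≤ K * |E s| := by gcongr)
        (continuousOn_const.mul hEc.abs) x hx.1 r hr)
      (B := fun t => - (E 0 * exp (-(K + 1) * t)))
      (B' := fun t => (K + 1) * (E 0 * exp (-(K + 1) * t)))
      (by simp) (by fun_prop)
      (fun x hx => by
        have : HasDerivAt (fun t => - (E 0 * exp (-(K + 1) * t)))
            (-(E 0 * (exp (-(K + 1) * x) * (-(K + 1) * 1)))) x :=
          (((hasDerivAt_id x).const_mul (-(K + 1))).exp.const_mul (E 0)).neg
        exact (this.congr_deriv (by ring)).hasDerivWithinAt)
      (fun x hx hxe => by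
        have hxe : E x = E 0 * exp (-(K + 1) * x) := by simpa using hxe
        have hp : 0 < E 0 * exp (-(K + 1) * x) := by positivity
        simp only [hxe, abs_of_pos hp]
        linarith)
      (Set.right_mem_Icc.2 ht)
    simpa using key
  refine ⟨low t ht, ?_⟩
  have pos : ∀ t, 0 ≤ t → 0 < E t := fun t ht => lt_of_lt_of_le (by positivity) (low t ht)
  have key := le_gronwallBound_of_liminf_deriv_right_le (f := E) (f' := fun t => -w * E t)
    (δ := E 0) (K := -w) (ε := 0) (a := 0) (b := t) (hEc.mono Set.Icc_subset_Ici_self)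
    (fun x hx r hr => slope_aux E (fun s => - (g s * E s)) (fun t => -w * E t)
        (fun a b ha hab => (hint a b ha hab).neg)
        (fun a b ha hab => by rw [hd a b ha hab, intervalIntegral.integral_neg])
        (fun s hs => by nlinarith [hg1 s hs, pos s hs])
        (continuousOn_const.mul hEc) x hx.1 r hr) le_rfl (fun x hx => by simp)
      t (Set.right_mem_Icc.2 ht)
  simpa [gronwallBound_ε0] using key

/-- Deterministic pathwise core of Theorem 1.5: exponential stabilization of the
`L²`-norm `e^{2 m(t)} E(t)` where `E` satisfies the energy identity and `m(t)/t → 0`. -/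
theorem stmt_2 (N : ℕ) (hN : 1 ≤ N) (μ : Fin N → ℂ)
    (α₀ C : ℝ) (hα₀ : 0 < α₀) (hC : α₀ ≤ C)
    (V : Fin N → ℝ → ℝ) (hVmeas : ∀ j, Measurable (V j))
    (hVlb : ∀ j, ∀ s ≥ (0:ℝ), α₀ ≤ V j s)
    (hVub : ∀ j, ∀ s ≥ (0:ℝ), V j s ≤ C)
    (E : ℝ → ℝ) (hEcont : ContinuousOn E (Set.Ici 0)) (hE0 : 0 < E 0)
    (hE : ∀ t ≥ (0:ℝ),
      E t = E 0 - 2 * ∑ j, ∫ s in (0:ℝ)..t, (μ j).re ^ 2 * V j s * E s)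
    (m : ℝ → ℝ) (hm : Tendsto (fun t => m t / t) atTop (nhds 0)) :
    (Filter.limsup (fun t => (1 / t) * Real.log (Real.exp (2 * m t) * E t)) atTop
        ≤ -(2 * α₀ * ∑ j, (μ j).re ^ 2)) ∧
    ((∀ j, (μ j).re ≠ 0) → 0 < 2 * α₀ * ∑ j, (μ j).re ^ 2) := by
  refine ⟨?_, fun h => ?_⟩
  swap
  · have : 0 < ∑ j, (μ j).re ^ 2 :=
      Finset.sum_pos (fun j _ => by have := h j; positivity) ⟨⟨0, hN⟩, Finset.mem_univ _⟩
    positivity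
  set w := 2 * α₀ * ∑ j, (μ j).re ^ 2 with hwdef
  set K := 2 * C * ∑ j, (μ j).re ^ 2 with hKdef
  have hw : 0 ≤ w := by positivity
  have hintj : ∀ j, ∀ a b : ℝ, 0 ≤ a → a ≤ b →
      IntervalIntegrable (fun s => (μ j).re ^ 2 * V j s * E s) volume a b := by
    intro j a b ha hab
    have hEi : IntervalIntegrable E volume a b :=
      (hEcont.mono (by rw [Set.uIcc_of_le hab]; exact fun s hs => ha.trans hs.1)).intervalIntegrable
    rw [intervalIntegrable_iff_integrableOn_Ioc_of_le hab] at hEi ⊢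
    refine Integrable.bdd_mul (c := (μ j).re ^ 2 * C) hEi
      (((hVmeas j).const_mul _).aestronglyMeasurable) ?_
    refine (ae_restrict_iff' measurableSet_Ioc).2 (Eventually.of_forall fun s hs => ?_)
    have hs0 : 0 ≤ s := ha.trans hs.1.le
    have h1 := hVlb j s hs0
    have h2 := hVub j s hs0
    have h3 : 0 ≤ V j s := hα₀.le.trans h1
    rw [Real.norm_of_nonneg (by positivity)]
    gcongr
  have hgE : (fun s => (2 * ∑ j, (μ j).re ^ 2 * V j s) * E s)
      = fun s => 2 * ∑ j, (μ j).re ^ 2 * V j s * E s := by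
    funext s
    rw [mul_assoc, Finset.sum_mul]
  have hb := two_bounds E (fun s => 2 * ∑ j, (μ j).re ^ 2 * V j s) w K hw
    (by fun_prop)
    (fun s hs => by
      simp only [hwdef, mul_assoc, Finset.mul_sum]
      refine Finset.sum_le_sum fun j _ => ?_
      nlinarith [mul_le_mul_of_nonneg_left (hVlb j s hs) (sq_nonneg (μ j).re)])
    (fun s hs => by
      simp only [hKdef, mul_assoc, Finset.mul_sum]
      refine Finset.sum_le_sum fun j _ => ?_
      nlinarith [mul_le_mul_of_nonneg_left (hVub j s hs) (sq_nonneg (μ j).re)])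
    hEcont hE0
    (fun a b ha hab => by
      rw [hgE]
      have := (IntervalIntegrable.sum Finset.univ (fun j _ => hintj j a b ha hab)).const_mul 2
      simpa [Finset.sum_apply] using this)
    (fun t ht => by
      rw [hgE, intervalIntegral.integral_const_mul,
        intervalIntegral.integral_finsetSum (fun j _ => hintj j 0 t le_rfl ht)]
      exact hE t ht)
  have hlim : ∀ c : ℝ, Tendsto (fun t => 2 * (m t / t) + log (E 0) / t + -c) atTop
      (nhds (-c)) := by
    intro c
    have := ((hm.const_mul 2).add
      (tendsto_const_nhds (x := log (E 0)).div_atTop tendsto_id)).add_const (-c)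
    simpa using this
  have hlogeq : ∀ t, 0 < t → ∀ c : ℝ, 2 * (m t / t) + log (E 0) / t + -c
      = (1 / t) * (2 * m t + log (E 0 * exp (-c * t))) := by
    intro t ht c
    rw [Real.log_mul hE0.ne' (exp_pos _).ne', Real.log_exp]
    field_simp
    ring
  have hu : ∀ t, 0 < t → (1 / t) * Real.log (Real.exp (2 * m t) * E t)
      = (1 / t) * (2 * m t + log (E t)) := by
    intro t ht
    have hp : 0 < E t := lt_of_lt_of_le (by positivity) (hb t ht.le).1
    rw [Real.log_mul (exp_pos _).ne' hp.ne', Real.log_exp]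
  have hup : ∀ᶠ t in atTop, (1 / t) * Real.log (Real.exp (2 * m t) * E t)
      ≤ 2 * (m t / t) + log (E 0) / t + -w := by
    filter_upwards [eventually_gt_atTop 0] with t ht
    have hp : 0 < E t := lt_of_lt_of_le (by positivity) (hb t ht.le).1
    rw [hu t ht, hlogeq t ht]
    have := Real.log_le_log hp (hb t ht.le).2
    gcongr
  have hlow : ∀ᶠ t in atTop, 2 * (m t / t) + log (E 0) / t + -(K + 1)
      ≤ (1 / t) * Real.log (Real.exp (2 * m t) * E t) := by
    filter_upwards [eventually_gt_atTop 0] with t ht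
    rw [hu t ht, hlogeq t ht]
    have := Real.log_le_log (by positivity) (hb t ht.le).1
    gcongr
  have hbdd : IsBoundedUnder (· ≥ ·) atTop
      (fun t => (1 / t) * Real.log (Real.exp (2 * m t) * E t)) :=
    (hlim (K + 1)).isBoundedUnder_ge.mono_ge hlow
  rw [← (hlim w).limsup_eq]
  exact limsup_le_limsup hup hbdd.isCoboundedUnder_le (hlim w).isBoundedUnder_le
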